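/- arXiv:2212.13239 — 3 statements merged into one kernel-verified Lean document; each statement's English description precedes it below -/
import Mathlib

section
/- The Gaussian projection is not globally Lipschitz in the weighted total variation metric: for 0 < ε ≤ 1/2 let μ₁ = N(0, ε) on R and μ₂ = ε δ_{−1} + (1 − 2ε) μ₁ + ε δ_{1}. Then d_g(μ₁, μ₂) ≤ 8ε, while d_g(Gμ₁, Gμ₂) ≥ d_TV(N(0,1), N(0,2)) > 0, where d_TV is the (unweighted) total variation distance; consequently d_g(Gμ₁, Gμ₂)/d_g(μ₁, μ₂) → ∞ as ε → 0. -/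
open MeasureTheory Matrix
open scoped BigOperators ENNReal

noncomputable section

namespace EnKF

/-- Points of `ℝ^n`, with Lebesgue measure as `volume`. -/
abbrev Vec (n : ℕ) := Fin n → ℝ

/-- Euclidean norm of a finitely indexed real vector. -/
def enorm {ι : Type*} [Fintype ι] (v : ι → ℝ) : ℝ := Real.sqrt (∑ i, v i ^ 2)

/-- The weight function `g(v) = 1 + |v|²` on `ℝ^n`. -/
def gw {n : ℕ} (v : Vec n) : ℝ := 1 + ∑ i, v i ^ 2

/-- The weight function `g(u, y) = 1 + |u|² + |y|²` on `ℝ^d × ℝ^K`. -/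
def gw2 {d K : ℕ} (p : Vec d × Vec K) : ℝ := 1 + (∑ i, p.1 i ^ 2) + (∑ j, p.2 j ^ 2)

/-- Weighted total-variation metric with weight `G`:
`d_G(μ₁, μ₂) = sup { |μ₁[f] − μ₂[f]| : f measurable, |f| ≤ G pointwise }`. -/
def dG {E : Type*} [MeasurableSpace E] (G : E → ℝ) (μ₁ μ₂ : Measure E) : ℝ :=
  ⨆ f : {f : E → ℝ // Measurable f ∧ ∀ v, |f v| ≤ G v},
    |(∫ v, f.1 v ∂μ₁) - ∫ v, f.1 v ∂μ₂|

/-- Loewner order on symmetric matrices: `loe A B ↔ A ≼ B`. -/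
def loe {ι : Type*} [Fintype ι] (A B : Matrix ι ι ℝ) : Prop := (B - A).PosSemidef

/-- Mean vector of a measure on `ℝ^n`. -/
def mean {n : ℕ} (μ : Measure (Vec n)) : Vec n := fun i => ∫ v, v i ∂μ

/-- Covariance matrix of a measure on `ℝ^n`. -/
def cov {n : ℕ} (μ : Measure (Vec n)) : Matrix (Fin n) (Fin n) ℝ :=
  Matrix.of fun i j => ∫ v, (v i - mean μ i) * (v j - mean μ j) ∂μ

/-- Density of the Gaussian `N(m, S)` on `ℝ^n`. -/
def gaussDensity {n : ℕ} (m : Vec n) (S : Matrix (Fin n) (Fin n) ℝ) (x : Vec n) : ℝ :=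
  (Real.sqrt ((2 * Real.pi) ^ n * S.det))⁻¹ *
    Real.exp (-(1 / 2) * ((x - m) ⬝ᵥ (S⁻¹ *ᵥ (x - m))))

/-- The (nondegenerate) Gaussian measure `N(m, S)` on `ℝ^n`. -/
def gauss {n : ℕ} (m : Vec n) (S : Matrix (Fin n) (Fin n) ℝ) : Measure (Vec n) :=
  volume.withDensity fun x => ENNReal.ofReal (gaussDensity m S x)

/-- Gaussian projection `G` on `ℝ^n`: the Gaussian with the same mean and covariance. -/
def Gproj {n : ℕ} (μ : Measure (Vec n)) : Measure (Vec n) := gauss (mean μ) (cov μ)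

variable {d K : ℕ}

/-- Mean of the first (state) marginal of a measure on `ℝ^d × ℝ^K`. -/
def meanU (π : Measure (Vec d × Vec K)) : Vec d := fun i => ∫ p, p.1 i ∂π

/-- Mean of the second (data) marginal of a measure on `ℝ^d × ℝ^K`. -/
def meanY (π : Measure (Vec d × Vec K)) : Vec K := fun j => ∫ p, p.2 j ∂π

/-- Block `C^{uu}` of the covariance of a measure on `ℝ^d × ℝ^K`. -/
def covUU (π : Measure (Vec d × Vec K)) : Matrix (Fin d) (Fin d) ℝ :=
  Matrix.of fun i j => ∫ p, (p.1 i - meanU π i) * (p.1 j - meanU π j) ∂π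

/-- Block `C^{uy}` of the covariance of a measure on `ℝ^d × ℝ^K`. -/
def covUY (π : Measure (Vec d × Vec K)) : Matrix (Fin d) (Fin K) ℝ :=
  Matrix.of fun i j => ∫ p, (p.1 i - meanU π i) * (p.2 j - meanY π j) ∂π

/-- Block `C^{yy}` of the covariance of a measure on `ℝ^d × ℝ^K`. -/
def covYY (π : Measure (Vec d × Vec K)) : Matrix (Fin K) (Fin K) ℝ :=
  Matrix.of fun i j => ∫ p, (p.2 i - meanY π i) * (p.2 j - meanY π j) ∂π

/-- Full covariance matrix of a measure on `ℝ^d × ℝ^K`, in block form. -/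
def covBlock (π : Measure (Vec d × Vec K)) : Matrix (Fin d ⊕ Fin K) (Fin d ⊕ Fin K) ℝ :=
  Matrix.fromBlocks (covUU π) (covUY π) (covUY π)ᵀ (covYY π)

/-- Density of a Gaussian on `ℝ^d × ℝ^K` with mean `(mu, my)` and covariance `S`. -/
def jointGaussDensity (mu : Vec d) (my : Vec K)
    (S : Matrix (Fin d ⊕ Fin K) (Fin d ⊕ Fin K) ℝ) (p : Vec d × Vec K) : ℝ :=
  (Real.sqrt ((2 * Real.pi) ^ (d + K) * S.det))⁻¹ *
    Real.exp (-(1 / 2) *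
      (Sum.elim (p.1 - mu) (p.2 - my) ⬝ᵥ (S⁻¹ *ᵥ Sum.elim (p.1 - mu) (p.2 - my))))

/-- Gaussian measure on `ℝ^d × ℝ^K` with mean `(mu, my)` and covariance `S`. -/
def jointGauss (mu : Vec d) (my : Vec K)
    (S : Matrix (Fin d ⊕ Fin K) (Fin d ⊕ Fin K) ℝ) : Measure (Vec d × Vec K) :=
  volume.withDensity fun p => ENNReal.ofReal (jointGaussDensity mu my S p)

/-- Density of the Gaussian projection of a measure on `ℝ^d × ℝ^K`. -/
def gProjDensity2 (π : Measure (Vec d × Vec K)) : Vec d × Vec K → ℝ :=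
  jointGaussDensity (meanU π) (meanY π) (covBlock π)

/-- Gaussian projection on `ℝ^d × ℝ^K`. -/
def Gproj2 (π : Measure (Vec d × Vec K)) : Measure (Vec d × Vec K) :=
  jointGauss (meanU π) (meanY π) (covBlock π)

/-- Prediction operator `P`: the law of `Ψ(V) + ξ`, `V ∼ μ` independent of `ξ ∼ N(0, Σ)`. -/
def Pop (Psi : Vec d → Vec d) (Sig : Matrix (Fin d) (Fin d) ℝ)
    (μ : Measure (Vec d)) : Measure (Vec d) :=
  (μ.prod (gauss 0 Sig)).map fun p => Psi p.1 + p.2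

/-- Lifting operator `Q`: the law of `(U, H(U) + η)`, `U ∼ μ` independent of `η ∼ N(0, Γ)`. -/
def Qop (H : Vec d → Vec K) (Gam : Matrix (Fin K) (Fin K) ℝ)
    (μ : Measure (Vec d)) : Measure (Vec d × Vec K) :=
  (μ.prod (gauss 0 Gam)).map fun p => (p.1, H p.1 + p.2)

/-- Lebesgue density of `Pμ`. -/
def predDensity (Psi : Vec d → Vec d) (Sig : Matrix (Fin d) (Fin d) ℝ)
    (μ : Measure (Vec d)) (u : Vec d) : ℝ :=
  (Real.sqrt ((2 * Real.pi) ^ d * Sig.det))⁻¹ *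
    ∫ v, Real.exp (-(1 / 2) * ((u - Psi v) ⬝ᵥ (Sig⁻¹ *ᵥ (u - Psi v)))) ∂μ

/-- Lebesgue density of `QPμ` on `ℝ^d × ℝ^K`. -/
def qpDensity (Psi : Vec d → Vec d) (Sig : Matrix (Fin d) (Fin d) ℝ)
    (H : Vec d → Vec K) (Gam : Matrix (Fin K) (Fin K) ℝ)
    (μ : Measure (Vec d)) (p : Vec d × Vec K) : ℝ :=
  predDensity Psi Sig μ p.1 * gaussDensity (H p.1) Gam p.2

/-- Conditioning operator `B` applied to a (joint) density `f` and a datum `y†`: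
the measure on `ℝ^d` with density `u ↦ f(u, y†) / ∫ f(U, y†) dU`. -/
def condM (f : Vec d × Vec K → ℝ) (ydag : Vec K) : Measure (Vec d) :=
  volume.withDensity fun u => ENNReal.ofReal (f (u, ydag) / ∫ U, f (U, ydag))

/-- Kalman transport operator `T`: the pushforward of `π` under
`(u, y) ↦ u + C^{uy}(π) C^{yy}(π)⁻¹ (y† − y)`. -/
def Top (ydag : Vec K) (π : Measure (Vec d × Vec K)) : Measure (Vec d) :=
  π.map fun p => p.1 + covUY π *ᵥ ((covYY π)⁻¹ *ᵥ (ydag - p.2))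

/-- Operator (spectral) norm of a real matrix. -/
def opNorm {ι : Type*} [Fintype ι] {κ : Type*} [Fintype κ] (A : Matrix ι κ ℝ) : ℝ :=
  ⨆ x : {x : κ → ℝ // ∑ i, x i ^ 2 ≤ 1}, enorm (A *ᵥ x.1)

/-- Frobenius norm of a real matrix. -/
def frobNorm {ι κ : Type*} [Fintype ι] [Fintype κ] (A : Matrix ι κ ℝ) : ℝ :=
  Real.sqrt (∑ i, ∑ j, A i j ^ 2)

/-- Weighted norm `|x|_S = |S^{-1/2} x|`, i.e. `√(xᵀ S⁻¹ x)`. -/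
def wnorm {n : ℕ} (S : Matrix (Fin n) (Fin n) ℝ) (x : Vec n) : ℝ :=
  Real.sqrt (x ⬝ᵥ (S⁻¹ *ᵥ x))

/-- The set `𝒫_R(ℝ^n)` of probability measures with `|M(μ)| ≤ R` and
`R⁻² I ≼ C(μ) ≼ R² I`. -/
def PR (n : ℕ) (R : ℝ) : Set (Measure (Vec n)) :=
  {μ | IsProbabilityMeasure μ ∧ enorm (mean μ) ≤ R ∧
    loe ((R ^ 2)⁻¹ • 1) (cov μ) ∧ loe (cov μ) (R ^ 2 • 1)}

/-- The set `𝒫_R(ℝ^d × ℝ^K)`. -/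
def PR2 (d K : ℕ) (R : ℝ) : Set (Measure (Vec d × Vec K)) :=
  {π | IsProbabilityMeasure π ∧ enorm (Sum.elim (meanU π) (meanY π)) ≤ R ∧
    loe ((R ^ 2)⁻¹ • 1) (covBlock π) ∧ loe (covBlock π) (R ^ 2 • 1)}

/-- Smallest eigenvalue of a symmetric matrix (Rayleigh quotient form). -/
def lambdaMin {ι : Type*} [Fintype ι] (A : Matrix ι ι ℝ) : ℝ :=
  ⨅ x : {x : ι → ℝ // ∑ i, x i ^ 2 = 1}, x.1 ⬝ᵥ (A *ᵥ x.1)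

/-- Kullback–Leibler divergence `KL(μ₁ ‖ μ₂) = ∫ (dμ₁/dμ₂) log (dμ₁/dμ₂) dμ₂`. -/
def kl {E : Type*} [MeasurableSpace E] (μ₁ μ₂ : Measure E) : ℝ :=
  ∫ v, ((μ₁.rnDeriv μ₂ v).toReal * Real.log (μ₁.rnDeriv μ₂ v).toReal) ∂μ₂


/-- Weight `g(x) = 1 + x²` on `ℝ`. -/
def g1 (x : ℝ) : ℝ := 1 + x ^ 2

/-- One-dimensional Gaussian `N(m, s)` (with variance `s > 0`), as a measure on `ℝ`. -/
def gauss1 (m s : ℝ) : Measure ℝ :=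
  volume.withDensity fun x =>
    ENNReal.ofReal ((Real.sqrt (2 * Real.pi * s))⁻¹ * Real.exp (-(x - m) ^ 2 / (2 * s)))

/-- Mean of a measure on `ℝ`. -/
def mean1 (μ : Measure ℝ) : ℝ := ∫ x, x ∂μ

/-- Variance of a measure on `ℝ`. -/
def var1 (μ : Measure ℝ) : ℝ := ∫ x, (x - mean1 μ) ^ 2 ∂μ

/-- Gaussian projection on `ℝ`. -/
def Gproj1 (μ : Measure ℝ) : Measure ℝ := gauss1 (mean1 μ) (var1 μ)

/-- The counterexample measures: `μ₁ = N(0, ε)`. -/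
def mu1 (ε : ℝ) : Measure ℝ := gauss1 0 ε

/-- The counterexample measures: `μ₂ = ε δ_{-1} + (1 − 2ε) μ₁ + ε δ_1`. -/
def mu2 (ε : ℝ) : Measure ℝ :=
  ENNReal.ofReal ε • Measure.dirac (-1 : ℝ) + ENNReal.ofReal (1 - 2 * ε) • mu1 ε +
    ENNReal.ofReal ε • Measure.dirac (1 : ℝ)

/-!
Both `Gμ₁ = N(0, ε)` and `Gμ₂ = N(0, (3 - 2ε)ε)` are centred, and their variances have ratio
`3 - 2ε ≥ 2`, however small `ε` is. Hence some map `X ↦ rX + Z` with independent Gaussian noise `Z`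
carries them to `N(0, 1)` and `N(0, 2)`, and total variation does not increase under such a map
(data processing). On the other hand `μ₂ - μ₁` only moves mass `2ε`, and the integral of `g` against
each of `δ₋₁`, `δ₁` and `μ₁` is at most `2`.
-/

open ProbabilityTheory
open scoped NNReal Topology

section WeightedTotalVariation

variable {E F : Type*} [MeasurableSpace E] [MeasurableSpace F] {G G' : E → ℝ} {μ ν : Measure E}

theorem integrable_of_abs_le {f : E → ℝ} (hG : Integrable G μ) (hf : Measurable f)
    (hfG : ∀ v, |f v| ≤ G v) : Integrable f μ :=
  hG.mono' hf.aestronglyMeasurable (.of_forall hfG)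

theorem abs_integral_le_of_abs_le {f : E → ℝ} (hG : Integrable G μ) (hf : ∀ v, |f v| ≤ G v) :
    |∫ v, f v ∂μ| ≤ ∫ v, G v ∂μ := by
  rw [← Real.norm_eq_abs]
  exact norm_integral_le_of_norm_le hG (.of_forall hf)

theorem dG_nonneg : 0 ≤ dG G μ ν :=
  Real.iSup_nonneg fun _ => abs_nonneg _

theorem dG_le {c : ℝ} (hc : 0 ≤ c)
    (h : ∀ f : E → ℝ, Measurable f → (∀ v, |f v| ≤ G v) →
      |(∫ v, f v ∂μ) - ∫ v, f v ∂ν| ≤ c) : dG G μ ν ≤ c :=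
  Real.iSup_le (fun f => h f.1 f.2.1 f.2.2) hc

theorem le_dG (hμ : Integrable G μ) (hν : Integrable G ν) {f : E → ℝ} (hf : Measurable f)
    (hfG : ∀ v, |f v| ≤ G v) : |(∫ v, f v ∂μ) - ∫ v, f v ∂ν| ≤ dG G μ ν := by
  refine le_ciSup (f := fun f : {f : E → ℝ // Measurable f ∧ ∀ v, |f v| ≤ G v} =>
    |(∫ v, f.1 v ∂μ) - ∫ v, f.1 v ∂ν|) ⟨(∫ v, G v ∂μ) + ∫ v, G v ∂ν, ?_⟩ ⟨f, hf, hfG⟩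
  rintro _ ⟨⟨k, -, hk⟩, rfl⟩
  exact (abs_sub _ _).trans
    (add_le_add (abs_integral_le_of_abs_le hμ hk) (abs_integral_le_of_abs_le hν hk))

theorem dG_mono (hμ : Integrable G' μ) (hν : Integrable G' ν) (h : ∀ v, G v ≤ G' v) :
    dG G μ ν ≤ dG G' μ ν :=
  dG_le dG_nonneg fun _ hf hfG => le_dG hμ hν hf fun v => (hfG v).trans (h v)

theorem dG_pos_of_ne [IsFiniteMeasure μ] [IsFiniteMeasure ν] (hμ : Integrable G μ)
    (hν : Integrable G ν) (hG : ∀ v, 1 ≤ G v) (hne : μ ≠ ν) : 0 < dG G μ ν := by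
  by_contra! hle
  refine hne (Measure.ext fun A hA => (measureReal_eq_measureReal_iff).1 ?_)
  have hA1 (v : E) : |A.indicator (fun _ => (1 : ℝ)) v| ≤ G v := by
    refine le_trans ?_ (hG v)
    by_cases hv : v ∈ A <;> simp [hv]
  have h := (le_dG hμ hν (measurable_const.indicator hA) hA1).trans hle
  simpa [integral_indicator_const _ hA, sub_eq_zero] using h

theorem dG_map_le {G : F → ℝ} {φ : E → F} (hφ : Measurable φ)
    (hμ : Integrable (fun v => G (φ v)) μ) (hν : Integrable (fun v => G (φ v)) ν) :
    dG G (μ.map φ) (ν.map φ) ≤ dG (fun v => G (φ v)) μ ν := by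
  refine dG_le dG_nonneg fun f hf hfG => ?_
  rw [integral_map hφ.aemeasurable hf.aestronglyMeasurable,
    integral_map hφ.aemeasurable hf.aestronglyMeasurable]
  exact le_dG hμ hν (hf.comp hφ) fun v => hfG (φ v)

theorem dG_one_conv_le [AddMonoid E] [MeasurableAdd₂ E] [IsFiniteMeasure μ] [IsFiniteMeasure ν]
    (ρ : Measure E) [IsProbabilityMeasure ρ] :
    dG (fun _ => 1) (μ ∗ ρ) (ν ∗ ρ) ≤ dG (fun _ => 1) μ ν := by
  refine dG_le dG_nonneg fun f hf hf1 => ?_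
  have hint (η : Measure E) [IsFiniteMeasure η] : Integrable f η :=
    integrable_of_abs_le (integrable_const 1) hf hf1
  rw [integral_conv (hint _), integral_conv (hint _)]
  refine le_dG (integrable_const 1) (integrable_const 1) ?_ fun x => ?_
  · exact (StronglyMeasurable.integral_prod_right'
      (hf.comp measurable_add).stronglyMeasurable).measurable
  · simpa using abs_integral_le_of_abs_le (μ := ρ) (integrable_const 1) fun y => hf1 (x + y)

end WeightedTotalVariation

section Gaussian

variable (m : ℝ) {s : ℝ}

theorem gauss1_eq_gaussianReal (hs : 0 < s) : gauss1 m s = gaussianReal m s.toNNReal := by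
  rw [gaussianReal_of_var_ne_zero m (Real.toNNReal_pos.2 hs).ne', gauss1, gaussianPDF_def,
    gaussianPDFReal_def, Real.coe_toNNReal s hs.le]

theorem isProbabilityMeasure_gauss1 (hs : 0 < s) : IsProbabilityMeasure (gauss1 m s) := by
  rw [gauss1_eq_gaussianReal m hs]
  infer_instance

theorem integrable_id_gauss1 (hs : 0 < s) : Integrable (fun x => x) (gauss1 m s) := by
  rw [gauss1_eq_gaussianReal m hs]
  exact (memLp_id_gaussianReal 1).integrable (by simp)

theorem integrable_sq_gauss1 (hs : 0 < s) : Integrable (fun x => x ^ 2) (gauss1 m s) := by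
  rw [gauss1_eq_gaussianReal m hs]
  exact (memLp_id_gaussianReal 2).integrable_sq

theorem integrable_g1_gauss1 (hs : 0 < s) : Integrable g1 (gauss1 m s) := by
  have := isProbabilityMeasure_gauss1 m hs
  exact (integrable_const 1).add (integrable_sq_gauss1 m hs)

theorem mean1_gauss1 (hs : 0 < s) : mean1 (gauss1 m s) = m := by
  rw [gauss1_eq_gaussianReal m hs, mean1, integral_id_gaussianReal]

theorem var1_eq_variance (μ : Measure ℝ) : var1 μ = Var[fun x => x; μ] :=
  (variance_eq_integral aemeasurable_id').symm

theorem var1_gauss1 (hs : 0 < s) : var1 (gauss1 m s) = s := by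
  rw [var1_eq_variance, gauss1_eq_gaussianReal m hs, variance_fun_id_gaussianReal,
    Real.coe_toNNReal s hs.le]

theorem Gproj1_gauss1 (hs : 0 < s) : Gproj1 (gauss1 m s) = gauss1 m s := by
  rw [Gproj1, mean1_gauss1 m hs, var1_gauss1 m hs]

theorem gauss1_ne_of_ne {t : ℝ} (hs : 0 < s) (ht : 0 < t) (hst : s ≠ t) :
    gauss1 m s ≠ gauss1 m t := fun h =>
  hst (by rw [← var1_gauss1 m hs, h, var1_gauss1 m ht])

theorem integral_sq_gauss1 (hs : 0 < s) : ∫ x, x ^ 2 ∂gauss1 m s = m ^ 2 + s := by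
  have := isProbabilityMeasure_gauss1 m hs
  have hL2 : MemLp (fun x => x) 2 (gauss1 m s) :=
    (memLp_two_iff_integrable_sq measurable_id'.aestronglyMeasurable).2 (integrable_sq_gauss1 m hs)
  have h := variance_eq_sub hL2
  rw [← var1_eq_variance, var1_gauss1 m hs, ← mean1, mean1_gauss1 m hs] at h
  simp only [Pi.pow_apply] at h
  linarith

theorem integral_g1_gauss1 (hs : 0 < s) : ∫ x, g1 x ∂gauss1 m s = 1 + (m ^ 2 + s) := by
  have := isProbabilityMeasure_gauss1 m hs
  simp only [g1]
  rw [integral_add (integrable_const 1) (integrable_sq_gauss1 m hs), integral_sq_gauss1 m hs]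
  simp

theorem dG_one_gaussianReal_affine_le (r b m₁ m₂ : ℝ) (c v₁ v₂ : ℝ≥0) :
    dG (fun _ => 1) (gaussianReal (r * m₁ + b) (.mk (r ^ 2) (sq_nonneg r) * v₁ + c))
        (gaussianReal (r * m₂ + b) (.mk (r ^ 2) (sq_nonneg r) * v₂ + c)) ≤
      dG (fun _ => 1) (gaussianReal m₁ v₁) (gaussianReal m₂ v₂) := by
  simp only [← gaussianReal_conv_gaussianReal, ← gaussianReal_map_const_mul]
  exact (dG_one_conv_le _).trans
    (dG_map_le (measurable_const_mul r) (integrable_const 1) (integrable_const 1))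

theorem dG_one_gauss1_pos (m : ℝ) {s t : ℝ} (hs : 0 < s) (ht : 0 < t) (hst : s ≠ t) :
    0 < dG (fun _ => 1) (gauss1 m s) (gauss1 m t) := by
  have := isProbabilityMeasure_gauss1 m hs
  have := isProbabilityMeasure_gauss1 m ht
  exact dG_pos_of_ne (integrable_const 1) (integrable_const 1) (fun _ => le_rfl)
    (gauss1_ne_of_ne m hs ht hst)

theorem exists_affine_of_div_le_div {s t s' t' : ℝ} (hs : 0 < s) (hst : s < t) (hs' : 0 < s')
    (h : t / s ≤ t' / s') :
    ∃ a c : ℝ, 0 ≤ a ∧ 0 ≤ c ∧ a * s' + c = s ∧ a * t' + c = t := by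
  rw [div_le_div_iff₀ hs hs'] at h
  have hd : 0 < t' - s' := by nlinarith
  refine ⟨(t - s) / (t' - s'), (s * t' - t * s') / (t' - s'), div_nonneg (by linarith) hd.le,
    div_nonneg (by linarith) hd.le, ?_, ?_⟩ <;> field_simp <;> ring

theorem dG_one_gauss1_le_of_div_le_div (m m' : ℝ) {s t s' t' : ℝ} (hs : 0 < s) (hst : s < t)
    (hs' : 0 < s') (h : t / s ≤ t' / s') :
    dG (fun _ => 1) (gauss1 m s) (gauss1 m t) ≤ dG (fun _ => 1) (gauss1 m' s') (gauss1 m' t') := by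
  obtain ⟨a, c, ha, hc, hac, hac'⟩ := exists_affine_of_div_le_div hs hst hs' h
  have ht : 0 < t := hs.trans hst
  have ht' : 0 < t' := (div_pos_iff_of_pos_right hs').1 ((div_pos ht hs).trans_le h)
  have himage {u v : ℝ} (hu : 0 < u) (hv : 0 < v) (huv : a * u + c = v) :
      gauss1 m v = gaussianReal (√a * m' + (m - √a * m'))
        (.mk (√a ^ 2) (sq_nonneg _) * u.toNNReal + c.toNNReal) := by
    rw [gauss1_eq_gaussianReal m hv, gaussianReal_ext_iff]
    refine ⟨by ring, NNReal.eq ?_⟩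
    simp [Real.sq_sqrt ha, hu.le, hv.le, hc, huv]
  rw [himage hs' hs hac, himage ht' ht hac', gauss1_eq_gaussianReal m' hs',
    gauss1_eq_gaussianReal m' ht']
  exact dG_one_gaussianReal_affine_le ..

end Gaussian

theorem tendsto_div_nhdsGT_zero_atTop {F D : ℝ → ℝ} {c C : ℝ} (hc : 0 < c) (hC : 0 < C)
    (hF : ∀ᶠ ε in 𝓝[>] 0, c ≤ F ε)
    (hD : ∀ᶠ ε in 𝓝[>] 0, 0 < D ε ∧ D ε ≤ C * ε) :
    Filter.Tendsto (fun ε => F ε / D ε) (𝓝[>] 0) Filter.atTop := by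
  refine Filter.tendsto_atTop_mono' _ ?_
    (tendsto_inv_nhdsGT_zero.const_mul_atTop (div_pos hc hC))
  filter_upwards [hF, hD] with ε hFε ⟨hDpos, hDle⟩
  rw [← div_eq_mul_inv, div_div]
  exact div_le_div₀ (hc.le.trans hFε) hFε hDpos hDle

section Counterexample

variable {ε : ℝ}

theorem integrable_ofReal_smul_dirac {E : Type*} [MeasurableSpace E] [MeasurableSingletonClass E]
    (f : E → ℝ) (c : ℝ) (a : E) : Integrable f (ENNReal.ofReal c • Measure.dirac a) :=
  (integrable_dirac (by simp)).smul_measure (by simp)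

theorem integrable_mu2 {f : ℝ → ℝ} (hf : Integrable f (mu1 ε)) : Integrable f (mu2 ε) :=
  ((integrable_ofReal_smul_dirac f ε _).add_measure (hf.smul_measure (by simp))).add_measure
    (integrable_ofReal_smul_dirac f ε _)

theorem isFiniteMeasure_mu2 [IsFiniteMeasure (mu1 ε)] : IsFiniteMeasure (mu2 ε) :=
  (integrable_const_iff_isFiniteMeasure one_ne_zero).1 (integrable_mu2 (integrable_const (1 : ℝ)))

theorem integral_mu2 (h0 : 0 ≤ ε) (h1 : ε ≤ 1 / 2) {f : ℝ → ℝ} (hf : Integrable f (mu1 ε)) :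
    ∫ x, f x ∂mu2 ε = ε * f (-1) + (1 - 2 * ε) * ∫ x, f x ∂mu1 ε + ε * f 1 := by
  have hm : Integrable f (ENNReal.ofReal (1 - 2 * ε) • mu1 ε) := hf.smul_measure (by simp)
  have hd (a : ℝ) : Integrable f (ENNReal.ofReal ε • Measure.dirac a) :=
    integrable_ofReal_smul_dirac f ε a
  rw [mu2, integral_add_measure ((hd _).add_measure hm) (hd _), integral_add_measure (hd _) hm]
  simp only [integral_smul_measure, integral_dirac, smul_eq_mul]
  rw [ENNReal.toReal_ofReal h0, ENNReal.toReal_ofReal (by linarith)]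

theorem mean1_mu2 (h0 : 0 < ε) (h1 : ε ≤ 1 / 2) : mean1 (mu2 ε) = 0 := by
  rw [mean1, integral_mu2 h0.le h1 (integrable_id_gauss1 0 h0), ← mean1, mu1, mean1_gauss1 0 h0]
  ring

theorem var1_mu2 (h0 : 0 < ε) (h1 : ε ≤ 1 / 2) : var1 (mu2 ε) = (3 - 2 * ε) * ε := by
  simp only [var1, mean1_mu2 h0 h1, sub_zero]
  rw [integral_mu2 h0.le h1 (integrable_sq_gauss1 0 h0), mu1, integral_sq_gauss1 0 h0]
  ring

theorem Gproj1_mu2 (h0 : 0 < ε) (h1 : ε ≤ 1 / 2) :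
    Gproj1 (mu2 ε) = gauss1 0 ((3 - 2 * ε) * ε) := by
  rw [Gproj1, mean1_mu2 h0 h1, var1_mu2 h0 h1]

theorem mu1_ne_mu2 (h0 : 0 < ε) (h1 : ε ≤ 1 / 2) : mu1 ε ≠ mu2 ε := fun h => by
  have hvar : ε = (3 - 2 * ε) * ε := by rw [← var1_mu2 h0 h1, ← h, mu1, var1_gauss1 0 h0]
  nlinarith

theorem one_le_g1 (x : ℝ) : 1 ≤ g1 x :=
  le_add_of_nonneg_right (sq_nonneg x)

theorem dG_mu1_mu2_le (h0 : 0 < ε) (h1 : ε ≤ 1 / 2) : dG g1 (mu1 ε) (mu2 ε) ≤ 8 * ε := by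
  refine dG_le (by positivity) fun f hf hfg => ?_
  have hg : Integrable g1 (mu1 ε) := integrable_g1_gauss1 0 h0
  have hbulk : |∫ x, f x ∂mu1 ε| ≤ 1 + (0 ^ 2 + ε) :=
    (abs_integral_le_of_abs_le hg hfg).trans_eq (integral_g1_gauss1 0 h0)
  have hleft : |f (-1)| ≤ 2 := (hfg (-1)).trans_eq (by norm_num [g1])
  have hright : |f 1| ≤ 2 := (hfg 1).trans_eq (by norm_num [g1])
  rw [integral_mu2 h0.le h1 (integrable_of_abs_le hg hf hfg)]
  rw [abs_le] at hbulk hleft hright ⊢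
  constructor <;> nlinarith

theorem dG_mu1_mu2_pos (h0 : 0 < ε) (h1 : ε ≤ 1 / 2) : 0 < dG g1 (mu1 ε) (mu2 ε) := by
  have hg : Integrable g1 (mu1 ε) := integrable_g1_gauss1 0 h0
  have : IsProbabilityMeasure (mu1 ε) := isProbabilityMeasure_gauss1 0 h0
  have : IsFiniteMeasure (mu2 ε) := isFiniteMeasure_mu2
  exact dG_pos_of_ne hg (integrable_mu2 hg) one_le_g1 (mu1_ne_mu2 h0 h1)

theorem dG_one_gauss1_le_dG_Gproj1 (h0 : 0 < ε) (h1 : ε ≤ 1 / 2) :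
    dG (fun _ => 1) (gauss1 0 1) (gauss1 0 2) ≤ dG g1 (Gproj1 (mu1 ε)) (Gproj1 (mu2 ε)) := by
  have hvar : 0 < (3 - 2 * ε) * ε := mul_pos (by linarith) h0
  have hratio : 2 / 1 ≤ (3 - 2 * ε) * ε / ε := by
    rw [mul_div_cancel_right₀ _ h0.ne']
    linarith
  rw [mu1, Gproj1_gauss1 0 h0, Gproj1_mu2 h0 h1]
  calc dG (fun _ => 1) (gauss1 0 1) (gauss1 0 2)
      ≤ dG (fun _ => 1) (gauss1 0 ε) (gauss1 0 ((3 - 2 * ε) * ε)) :=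
        dG_one_gauss1_le_of_div_le_div 0 0 one_pos one_lt_two h0 hratio
    _ ≤ dG g1 (gauss1 0 ε) (gauss1 0 ((3 - 2 * ε) * ε)) :=
        dG_mono (integrable_g1_gauss1 0 h0) (integrable_g1_gauss1 0 hvar) one_le_g1

end Counterexample

/-- **The Gaussian projection is not globally Lipschitz** in the weighted TV metric
(Remark after Lemma A.11): `d_g(μ₁, μ₂) ≤ 8ε`, while `d_g(Gμ₁, Gμ₂)` is bounded below by
the positive constant `d_TV(N(0,1), N(0,2))`; hence the Lipschitz ratio blows up as `ε → 0⁺`. -/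
theorem Gproj_not_globally_lipschitz :
    (∀ ε : ℝ, 0 < ε → ε ≤ 1 / 2 →
      dG g1 (mu1 ε) (mu2 ε) ≤ 8 * ε ∧
      dG (fun _ : ℝ => (1 : ℝ)) (gauss1 0 1) (gauss1 0 2) ≤
        dG g1 (Gproj1 (mu1 ε)) (Gproj1 (mu2 ε))) ∧
    0 < dG (fun _ : ℝ => (1 : ℝ)) (gauss1 0 1) (gauss1 0 2) ∧
    Filter.Tendsto
      (fun ε : ℝ => dG g1 (Gproj1 (mu1 ε)) (Gproj1 (mu2 ε)) / dG g1 (mu1 ε) (mu2 ε))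
      (nhdsWithin 0 (Set.Ioi 0)) Filter.atTop := by
  have hTV := dG_one_gauss1_pos 0 one_pos two_pos (OfNat.one_ne_ofNat 2)
  have hsmall : ∀ᶠ ε : ℝ in 𝓝[>] 0, ε ∈ Set.Ioc 0 (1 / 2) :=
    Ioc_mem_nhdsGT one_half_pos
  refine ⟨fun ε h0 h1 => ⟨dG_mu1_mu2_le h0 h1, dG_one_gauss1_le_dG_Gproj1 h0 h1⟩, hTV,
    tendsto_div_nhdsGT_zero_atTop hTV (by norm_num : (0 : ℝ) < 8) ?_ ?_⟩
  · exact hsmall.mono fun ε hε => dG_one_gauss1_le_dG_Gproj1 hε.1 hε.2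
  · exact hsmall.mono fun ε hε => ⟨dG_mu1_mu2_pos hε.1 hε.2, dG_mu1_mu2_le hε.1 hε.2⟩

end EnKF
end
end

section
/- Uniform L∞–L¹ inequality for differences of scaled Gaussian densities: let g(·; m, S) denote the Lebesgue density of N(m, S) on R^K and, for α ≥ 1, let S^K_α be the set of symmetric K×K matrices M with α^{−1} I_K ≼ M ≼ α I_K. Then for every α ≥ 1 there exists L_α > 0 such that for all (c₁, m₁, S₁), (c₂, m₂, S₂) ∈ R × R^K × S^K_α, the function h(y) = c₁ g(y; m₁, S₁) − c₂ g(y; m₂, S₂) satisfies ‖h‖_∞ ≤ L_α ‖h‖₁. -/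
open MeasureTheory Matrix
open scoped BigOperators ENNReal

noncomputable section

namespace EnKF

variable {d K : ℕ}

/-!
The Fourier transform of `h = c₁ g(·; m₁, S₁) − c₂ g(·; m₂, S₂)` is `c₁ φ₁ − c₂ φ₂`, where
`φⱼ ξ = exp (-½ ξᵀSⱼξ + i ξᵀmⱼ)`. It is bounded by `δ = ‖h‖₁`, and Fourier inversion bounds
`(2π)^K ‖h‖_∞` by its `L¹` norm, so it remains to dominate that `L¹` norm by `δ`. The key is the
dilation identity `φ (2ξ) = (|φ ξ| φ ξ)²`: the map `z ↦ (|z| z)²` is Lipschitz with constant `4ρ³`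
on the disc of radius `ρ`. Evaluation at `ξ = 0` gives `|c₁ − c₂| ≤ δ`, hence
`|c₁| |φ₁ − φ₂| ≤ 2δ` everywhere, and therefore `|c₁ φ₁ − c₂ φ₂| (2ξ) ≤ 9 ρ³ δ` as soon as
`|φ₁ ξ|, |φ₂ ξ| ≤ ρ ≤ 1`. If `S₁, S₂ ≽ r I` one may take `ρ = exp (-r |ξ|² / 2)`.
-/

open Complex (I)
open scoped Real

section NormedAlgebra

theorem norm_sq_sub_sq_le {R : Type*} [SeminormedRing R] {x y : R} {ρ : ℝ}
    (hx : ‖x‖ ≤ ρ) (hy : ‖y‖ ≤ ρ) : ‖x ^ 2 - y ^ 2‖ ≤ 2 * ρ * ‖x - y‖ :=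
  calc ‖x ^ 2 - y ^ 2‖ = ‖x * (x - y) + (x - y) * y‖ := by congr 1; noncomm_ring
    _ ≤ ‖x‖ * ‖x - y‖ + ‖x - y‖ * ‖y‖ :=
      (norm_add_le _ _).trans (add_le_add (norm_mul_le _ _) (norm_mul_le _ _))
    _ ≤ ρ * ‖x - y‖ + ‖x - y‖ * ρ := by gcongr
    _ = 2 * ρ * ‖x - y‖ := by ring

theorem norm_norm_smul_self {E : Type*} [SeminormedAddCommGroup E] [NormedSpace ℝ E] (x : E) :
    ‖‖x‖ • x‖ = ‖x‖ ^ 2 := by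
  rw [norm_smul, norm_norm, sq]

theorem norm_norm_smul_sub_norm_smul_le {E : Type*} [SeminormedAddCommGroup E] [NormedSpace ℝ E]
    {x y : E} {ρ : ℝ} (hx : ‖x‖ ≤ ρ) (hy : ‖y‖ ≤ ρ) :
    ‖‖x‖ • x - ‖y‖ • y‖ ≤ 2 * ρ * ‖x - y‖ :=
  calc ‖‖x‖ • x - ‖y‖ • y‖ = ‖‖x‖ • (x - y) + (‖x‖ - ‖y‖) • y‖ := by congr 1; module
    _ ≤ ‖x‖ * ‖x - y‖ + |‖x‖ - ‖y‖| * ‖y‖ := by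
      refine (norm_add_le _ _).trans_eq ?_
      rw [norm_smul, norm_smul, norm_norm, Real.norm_eq_abs]
    _ ≤ ρ * ‖x - y‖ + ‖x - y‖ * ρ := by
      gcongr
      exact abs_norm_sub_norm_le x y
    _ = 2 * ρ * ‖x - y‖ := by ring

variable {A : Type*} [SeminormedRing A] [NormedAlgebra ℝ A] {x y : A} {ρ δ c₁ c₂ : ℝ}

theorem norm_sq_norm_smul_sub_le (hx : ‖x‖ ≤ ρ) (hy : ‖y‖ ≤ ρ) :
    ‖(‖x‖ • x) ^ 2 - (‖y‖ • y) ^ 2‖ ≤ 4 * ρ ^ 3 * ‖x - y‖ := by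
  have : 0 ≤ ρ := (norm_nonneg x).trans hx
  have norm_le {z : A} (hz : ‖z‖ ≤ ρ) : ‖‖z‖ • z‖ ≤ ρ ^ 2 := by
    rw [norm_norm_smul_self]
    gcongr
  calc ‖(‖x‖ • x) ^ 2 - (‖y‖ • y) ^ 2‖ ≤ 2 * ρ ^ 2 * ‖‖x‖ • x - ‖y‖ • y‖ :=
        norm_sq_sub_sq_le (norm_le hx) (norm_le hy)
    _ ≤ 2 * ρ ^ 2 * (2 * ρ * ‖x - y‖) := by
        gcongr
        exact norm_norm_smul_sub_norm_smul_le hx hy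
    _ = 4 * ρ ^ 3 * ‖x - y‖ := by ring

theorem abs_mul_norm_sub_le (hy : ‖y‖ ≤ 1) (hc : |c₁ - c₂| ≤ δ) (h : ‖c₁ • x - c₂ • y‖ ≤ δ) :
    |c₁| * ‖x - y‖ ≤ 2 * δ :=
  calc |c₁| * ‖x - y‖ = ‖(c₁ • x - c₂ • y) - (c₁ - c₂) • y‖ := by
        rw [← Real.norm_eq_abs, ← norm_smul]
        congr 1
        module
    _ ≤ ‖c₁ • x - c₂ • y‖ + |c₁ - c₂| * ‖y‖ := by
        refine (norm_sub_le _ _).trans_eq ?_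
        rw [norm_smul, Real.norm_eq_abs]
    _ ≤ δ + δ * 1 := by
        have := (abs_nonneg _).trans hc
        gcongr
    _ = 2 * δ := by ring

theorem norm_smul_sq_norm_smul_sub_le (hx : ‖x‖ ≤ ρ) (hy : ‖y‖ ≤ ρ) (hρ : ρ ≤ 1)
    (hc : |c₁ - c₂| ≤ δ) (h : ‖c₁ • x - c₂ • y‖ ≤ δ) :
    ‖c₁ • (‖x‖ • x) ^ 2 - c₂ • (‖y‖ • y) ^ 2‖ ≤ 9 * ρ ^ 3 * δ := by
  have hρ₀ : 0 ≤ ρ := (norm_nonneg x).trans hx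
  have hδ : 0 ≤ δ := (abs_nonneg _).trans hc
  have norm_sq_le : ‖(‖y‖ • y) ^ 2‖ ≤ ρ ^ 3 :=
    calc ‖(‖y‖ • y) ^ 2‖ ≤ ‖‖y‖ • y‖ ^ 2 := norm_pow_le' _ two_pos
      _ = ‖y‖ ^ 4 := by rw [norm_norm_smul_self]; ring
      _ ≤ ρ ^ 4 := by gcongr
      _ ≤ ρ ^ 3 := pow_le_pow_of_le_one hρ₀ hρ (by norm_num)
  calc ‖c₁ • (‖x‖ • x) ^ 2 - c₂ • (‖y‖ • y) ^ 2‖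
      = ‖c₁ • ((‖x‖ • x) ^ 2 - (‖y‖ • y) ^ 2) + (c₁ - c₂) • (‖y‖ • y) ^ 2‖ := by
        congr 1
        module
    _ ≤ |c₁| * ‖(‖x‖ • x) ^ 2 - (‖y‖ • y) ^ 2‖ + |c₁ - c₂| * ‖(‖y‖ • y) ^ 2‖ := by
        refine (norm_add_le _ _).trans_eq ?_
        rw [norm_smul, norm_smul, Real.norm_eq_abs, Real.norm_eq_abs]
    _ ≤ |c₁| * (4 * ρ ^ 3 * ‖x - y‖) + δ * ρ ^ 3 := by
        gcongr
        exact norm_sq_norm_smul_sub_le hx hy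
    _ = 4 * ρ ^ 3 * (|c₁| * ‖x - y‖) + δ * ρ ^ 3 := by ring
    _ ≤ 4 * ρ ^ 3 * (2 * δ) + δ * ρ ^ 3 := by
        gcongr 4 * ρ ^ 3 * ?_ + _
        exact abs_mul_norm_sub_le (hy.trans hρ) hc h
    _ = 9 * ρ ^ 3 * δ := by ring

end NormedAlgebra

section GaussianIntegral

variable {ι : Type*} [Fintype ι]

theorem integral_exp_neg_mul_dotProduct_self (b : ℝ) :
    ∫ x : ι → ℝ, Real.exp (-b * (x ⬝ᵥ x)) = √(π / b) ^ Fintype.card ι := by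
  have exp_eq_prod (x : ι → ℝ) : Real.exp (-b * (x ⬝ᵥ x)) = ∏ i, Real.exp (-b * x i ^ 2) := by
    simp only [← Real.exp_sum, ← Finset.mul_sum, dotProduct, sq]
  simp only [exp_eq_prod]
  rw [integral_fintype_prod_volume_eq_pow fun t : ℝ => Real.exp (-b * t ^ 2), integral_gaussian]

theorem integrable_exp_neg_mul_dotProduct_self {b : ℝ} (hb : 0 < b) :
    Integrable fun x : ι → ℝ => Real.exp (-b * (x ⬝ᵥ x)) :=
  .of_integral_ne_zero <| by
    rw [integral_exp_neg_mul_dotProduct_self]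
    positivity

theorem integral_cexp_neg_half_dotProduct_self_add (w : ι → ℝ) :
    ∫ u : ι → ℝ, Complex.exp (-(1 / 2) * (u ⬝ᵥ u : ℝ) + (w ⬝ᵥ u : ℝ) * I) =
      (√((2 * π) ^ Fintype.card ι) * Real.exp (-(1 / 2) * (w ⬝ᵥ w)) : ℝ) := by
  have h := GaussianFourier.integral_cexp_neg_mul_sum_add (b := 1 / 2) (by norm_num)
    (fun i : ι => (w i : ℂ) * I)
  have cpow_eq : ((π : ℂ) / (1 / 2)) ^ ((Fintype.card ι : ℂ) / 2) =
      (√((2 * π) ^ Fintype.card ι) : ℝ) := by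
    rw [Real.sqrt_eq_rpow, ← Real.rpow_natCast, ← Real.rpow_mul (by positivity),
      Complex.ofReal_cpow (by positivity)]
    push_cast
    congr 1 <;> ring
  rw [cpow_eq] at h
  convert h using 1
  · congr with u
    simp only [dotProduct, Complex.ofReal_sum, Complex.ofReal_mul, Finset.sum_mul, sq]
    congr 2
    exact Finset.sum_congr rfl fun i _ => by ring
  · push_cast
    simp only [dotProduct, Complex.ofReal_sum, Complex.ofReal_mul, mul_pow, Complex.I_sq,
      Finset.mul_sum, Finset.sum_div]
    congr 2
    exact Finset.sum_congr rfl fun i _ => by ring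

variable [DecidableEq ι]

theorem integral_comp_mulVec {E : Type*} [NormedAddCommGroup E] [NormedSpace ℝ E]
    {B : Matrix ι ι ℝ} (hB : B.det ≠ 0) (f : (ι → ℝ) → E) :
    ∫ x, f (B *ᵥ x) = |B.det|⁻¹ • ∫ u, f u := by
  have hdet : LinearMap.det (toLin' B) ≠ 0 := by rwa [LinearMap.det_toLin']
  have hemb : MeasurableEmbedding (toLin' B) :=
    ((toLin' B).equivOfDetNeZero hdet).toContinuousLinearEquiv.toHomeomorph.measurableEmbedding
  have h := hemb.integral_map (μ := volume) f
  rw [Real.map_matrix_volume_pi_eq_smul_volume_pi hB, integral_smul_measure,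
    ENNReal.toReal_ofReal (abs_nonneg _), abs_inv] at h
  exact h.symm

theorem exists_eq_transpose_mul_self_of_posDef {A : Matrix ι ι ℝ} (hA : A.PosDef) :
    ∃ B : Matrix ι ι ℝ, IsUnit B.det ∧ A = Bᵀ * B := by
  open scoped MatrixOrder Matrix.Norms.L2Operator in
  simpa [star_eq_conjTranspose, isUnit_iff_isUnit_det] using
    CStarAlgebra.isStrictlyPositive_iff_eq_star_mul_self.mp hA.isStrictlyPositive

theorem integral_cexp_neg_half_quadratic_add {A : Matrix ι ι ℝ} (hA : A.PosDef) (w : ι → ℝ) :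
    ∫ x : ι → ℝ, Complex.exp (-(1 / 2) * (x ⬝ᵥ (A *ᵥ x) : ℝ) + (w ⬝ᵥ x : ℝ) * I) =
      (√((2 * π) ^ Fintype.card ι / A.det) *
        Real.exp (-(1 / 2) * (w ⬝ᵥ (A⁻¹ *ᵥ w))) : ℝ) := by
  obtain ⟨B, hB, rfl⟩ := exists_eq_transpose_mul_self_of_posDef hA
  have quadratic_eq (x : ι → ℝ) : (B *ᵥ x) ⬝ᵥ (B *ᵥ x) = x ⬝ᵥ ((Bᵀ * B) *ᵥ x) := by
    rw [← mulVec_mulVec, dotProduct_mulVec x, vecMul_transpose]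
  have linear_eq (x : ι → ℝ) : (B⁻¹ᵀ *ᵥ w) ⬝ᵥ (B *ᵥ x) = w ⬝ᵥ x := by
    rw [mulVec_transpose, ← dotProduct_mulVec, mulVec_mulVec, nonsing_inv_mul _ hB, one_mulVec]
  have dual_eq : (B⁻¹ᵀ *ᵥ w) ⬝ᵥ (B⁻¹ᵀ *ᵥ w) = w ⬝ᵥ ((Bᵀ * B)⁻¹ *ᵥ w) := by
    rw [Matrix.mul_inv_rev, ← transpose_nonsing_inv, ← mulVec_mulVec, dotProduct_mulVec w,
      ← mulVec_transpose]
  have sqrt_eq : √((2 * π) ^ Fintype.card ι / (Bᵀ * B).det) =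
      |B.det|⁻¹ * √((2 * π) ^ Fintype.card ι) := by
    rw [det_mul, det_transpose, ← sq, Real.sqrt_div (by positivity), Real.sqrt_sq_eq_abs,
      div_eq_inv_mul]
  have h := integral_comp_mulVec hB.ne_zero fun u =>
    Complex.exp (-(1 / 2) * (u ⬝ᵥ u : ℝ) + ((B⁻¹ᵀ *ᵥ w) ⬝ᵥ u : ℝ) * I)
  simp only [integral_cexp_neg_half_dotProduct_self_add, quadratic_eq, linear_eq, dual_eq] at h
  rw [h, sqrt_eq, Complex.real_smul, ← Complex.ofReal_mul, mul_assoc]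

end GaussianIntegral

section Loewner

variable {ι : Type*} [Fintype ι] [DecidableEq ι] {r : ℝ} {S : Matrix ι ι ℝ}

theorem loe.mul_dotProduct_self_le (h : loe (r • 1) S) (ξ : ι → ℝ) :
    r * (ξ ⬝ᵥ ξ) ≤ ξ ⬝ᵥ (S *ᵥ ξ) := by
  simpa [sub_mulVec, smul_mulVec, dotProduct_sub] using h.dotProduct_mulVec_nonneg ξ

theorem loe.posDef (hr : 0 < r) (h : loe (r • 1) S) : S.PosDef := by
  simpa using (PosDef.one.smul hr).add_posSemidef h

end Loewner

/-- The characteristic function `ξ ↦ E[exp (i ξᵀX)]` of `X ∼ N(m, S)` on `ℝ^ι`, given by its closed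
form rather than as an integral so that its behaviour under dilation can be read off. -/
def gaussCharFun {ι : Type*} [Fintype ι] (m : ι → ℝ) (S : Matrix ι ι ℝ) (ξ : ι → ℝ) : ℂ :=
  Complex.exp (-(1 / 2) * (ξ ⬝ᵥ (S *ᵥ ξ) : ℝ) + (ξ ⬝ᵥ m : ℝ) * I)

namespace gaussCharFun

variable {ι : Type*} [Fintype ι]

theorem apply_zero (m : ι → ℝ) (S : Matrix ι ι ℝ) : gaussCharFun m S 0 = 1 := by
  simp [gaussCharFun]

theorem norm_apply (m : ι → ℝ) (S : Matrix ι ι ℝ) (ξ : ι → ℝ) :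
    ‖gaussCharFun m S ξ‖ = Real.exp (-(1 / 2) * (ξ ⬝ᵥ (S *ᵥ ξ))) := by
  simp [gaussCharFun, Complex.norm_exp]

theorem apply_two_smul (m : ι → ℝ) (S : Matrix ι ι ℝ) (ξ : ι → ℝ) :
    gaussCharFun m S ((2 : ℝ) • ξ) = (‖gaussCharFun m S ξ‖ • gaussCharFun m S ξ) ^ 2 := by
  rw [norm_apply, Complex.real_smul, Complex.ofReal_exp, gaussCharFun, gaussCharFun,
    ← Complex.exp_add, ← Complex.exp_nat_mul]
  simp only [mulVec_smul, smul_dotProduct, dotProduct_smul, smul_eq_mul]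
  push_cast
  ring_nf

theorem mul_cexp_neg (m : ι → ℝ) (S : Matrix ι ι ℝ) (y ξ : ι → ℝ) :
    gaussCharFun m S ξ * Complex.exp (-(ξ ⬝ᵥ y : ℝ) * I) =
      Complex.exp (-(1 / 2) * (ξ ⬝ᵥ (S *ᵥ ξ) : ℝ) + ((m - y) ⬝ᵥ ξ : ℝ) * I) := by
  rw [gaussCharFun, ← Complex.exp_add, dotProduct_comm (m - y), dotProduct_sub]
  push_cast
  ring_nf

variable [DecidableEq ι] {r δ c₁ c₂ : ℝ} {m₁ m₂ : ι → ℝ} {S S₁ S₂ : Matrix ι ι ℝ}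

theorem norm_apply_le (hS : loe (r • 1) S) (m ξ : ι → ℝ) :
    ‖gaussCharFun m S ξ‖ ≤ Real.exp (-(r / 2) * (ξ ⬝ᵥ ξ)) := by
  rw [norm_apply, Real.exp_le_exp]
  linarith [hS.mul_dotProduct_self_le ξ]

theorem norm_smul_sub_smul_le_exp (hr : 0 ≤ r) (hS₁ : loe (r • 1) S₁) (hS₂ : loe (r • 1) S₂)
    (hδ : ∀ ξ, ‖c₁ • gaussCharFun m₁ S₁ ξ - c₂ • gaussCharFun m₂ S₂ ξ‖ ≤ δ) (ξ : ι → ℝ) :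
    ‖c₁ • gaussCharFun m₁ S₁ ξ - c₂ • gaussCharFun m₂ S₂ ξ‖ ≤
      9 * δ * Real.exp (-(3 * r / 8) * (ξ ⬝ᵥ ξ)) := by
  obtain ⟨η, rfl⟩ : ∃ η : ι → ℝ, ξ = (2 : ℝ) • η := ⟨(2 : ℝ)⁻¹ • ξ, by simp⟩
  have abs_sub_le : |c₁ - c₂| ≤ δ := by
    have h := hδ 0
    simp only [apply_zero, ← sub_smul, norm_smul, norm_one, mul_one] at h
    exact h
  have exp_le_one : Real.exp (-(r / 2) * (η ⬝ᵥ η)) ≤ 1 := by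
    have : 0 ≤ η ⬝ᵥ η := by simpa using dotProduct_self_star_nonneg η
    rw [Real.exp_le_one_iff, neg_mul, neg_nonpos]
    positivity
  calc ‖c₁ • gaussCharFun m₁ S₁ ((2 : ℝ) • η) - c₂ • gaussCharFun m₂ S₂ ((2 : ℝ) • η)‖
      ≤ 9 * Real.exp (-(r / 2) * (η ⬝ᵥ η)) ^ 3 * δ := by
        rw [apply_two_smul, apply_two_smul]
        exact norm_smul_sq_norm_smul_sub_le (norm_apply_le hS₁ m₁ η) (norm_apply_le hS₂ m₂ η)
          exp_le_one abs_sub_le (hδ η)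
    _ = 9 * δ * Real.exp (-(3 * r / 8) * (((2 : ℝ) • η) ⬝ᵥ ((2 : ℝ) • η))) := by
        rw [← Real.exp_nat_mul, smul_dotProduct, dotProduct_smul, mul_right_comm]
        simp only [smul_eq_mul]
        push_cast
        ring_nf

end gaussCharFun

section FourierTransform

variable {S S₁ S₂ : Matrix (Fin K) (Fin K) ℝ}

theorem integral_gaussDensity_mul_cexp (hS : S.PosDef) (m ξ : Vec K) :
    ∫ x, (gaussDensity m S x : ℂ) * Complex.exp ((ξ ⬝ᵥ x : ℝ) * I) = gaussCharFun m S ξ := by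
  have hdet := hS.det_pos
  have translate (x : Vec K) :
      (gaussDensity m S (x + m) : ℂ) * Complex.exp ((ξ ⬝ᵥ (x + m) : ℝ) * I) =
        ((√((2 * π) ^ K * S.det))⁻¹ : ℝ) * Complex.exp ((ξ ⬝ᵥ m : ℝ) * I) *
          Complex.exp (-(1 / 2) * (x ⬝ᵥ (S⁻¹ *ᵥ x) : ℝ) + (ξ ⬝ᵥ x : ℝ) * I) := by
    simp only [gaussDensity, add_sub_cancel_right, dotProduct_add, Complex.exp_add, add_mul,
      Complex.ofReal_mul, Complex.ofReal_add, Complex.ofReal_exp]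
    push_cast
    ring
  have sqrt_ne_zero : ((√((2 * π) ^ K * S.det) : ℝ) : ℂ) ≠ 0 := by
    rw [Complex.ofReal_ne_zero]
    positivity
  rw [← integral_add_right_eq_self _ m]
  simp only [translate]
  rw [integral_const_mul, integral_cexp_neg_half_quadratic_add hS.inv, gaussCharFun,
    nonsing_inv_nonsing_inv _ hdet.ne'.isUnit, det_nonsing_inv, Ring.inverse_eq_inv',
    div_inv_eq_mul, Fintype.card_fin, Complex.exp_add]
  push_cast
  field_simp

theorem integral_gaussCharFun_mul_cexp_neg (hS : S.PosDef) (m y : Vec K) :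
    ∫ ξ, gaussCharFun m S ξ * Complex.exp (-(ξ ⬝ᵥ y : ℝ) * I) =
      ((2 * π) ^ K * gaussDensity m S y : ℝ) := by
  have hdet := hS.det_pos
  have sqrt_eq : √((2 * π) ^ K / S.det) = (2 * π) ^ K * (√((2 * π) ^ K * S.det))⁻¹ := by
    rw [← div_eq_mul_inv, eq_div_iff (by positivity), ← Real.sqrt_mul (by positivity),
      Real.sqrt_eq_iff_mul_self_eq (by positivity) (by positivity)]
    field_simp
  simp only [gaussCharFun.mul_cexp_neg]
  rw [integral_cexp_neg_half_quadratic_add hS, Fintype.card_fin, sqrt_eq, gaussDensity,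
    ← neg_sub y m, mulVec_neg, neg_dotProduct_neg, mul_assoc]

theorem integrable_gaussDensity_mul_cexp (hS : S.PosDef) (m ξ : Vec K) :
    Integrable fun x => (gaussDensity m S x : ℂ) * Complex.exp ((ξ ⬝ᵥ x : ℝ) * I) :=
  .of_integral_ne_zero <| by
    rw [integral_gaussDensity_mul_cexp hS]
    exact Complex.exp_ne_zero _

theorem gaussDensity_pos (hS : S.PosDef) (m y : Vec K) : 0 < gaussDensity m S y := by
  have := hS.det_pos
  rw [gaussDensity]
  positivity

theorem integrable_gaussCharFun_mul_cexp_neg (hS : S.PosDef) (m y : Vec K) :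
    Integrable fun ξ => gaussCharFun m S ξ * Complex.exp (-(ξ ⬝ᵥ y : ℝ) * I) :=
  .of_integral_ne_zero <| by
    rw [integral_gaussCharFun_mul_cexp_neg hS, Complex.ofReal_ne_zero]
    have := gaussDensity_pos hS m y
    positivity

theorem norm_gaussCharFun_sub_le_integral (hS₁ : S₁.PosDef) (hS₂ : S₂.PosDef) (c₁ c₂ : ℝ)
    (m₁ m₂ : Vec K) (ξ : Vec K) :
    ‖c₁ • gaussCharFun m₁ S₁ ξ - c₂ • gaussCharFun m₂ S₂ ξ‖ ≤
      ∫ z, |c₁ * gaussDensity m₁ S₁ z - c₂ * gaussDensity m₂ S₂ z| := by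
  have hint₁ := (integrable_gaussDensity_mul_cexp hS₁ m₁ ξ).fun_smul c₁
  have hint₂ := (integrable_gaussDensity_mul_cexp hS₂ m₂ ξ).fun_smul c₂
  rw [← integral_gaussDensity_mul_cexp hS₁, ← integral_gaussDensity_mul_cexp hS₂,
    ← integral_smul, ← integral_smul, ← integral_sub hint₁ hint₂]
  refine (norm_integral_le_integral_norm _).trans_eq ?_
  congr with z
  rw [← smul_mul_assoc, ← smul_mul_assoc, ← sub_mul, norm_mul, Complex.norm_exp_ofReal_mul_I,
    mul_one, Complex.real_smul, Complex.real_smul]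
  norm_cast

theorem abs_gaussDensity_sub_le_integral (hS₁ : S₁.PosDef) (hS₂ : S₂.PosDef) (c₁ c₂ : ℝ)
    (m₁ m₂ : Vec K) (y : Vec K) :
    (2 * π) ^ K * |c₁ * gaussDensity m₁ S₁ y - c₂ * gaussDensity m₂ S₂ y| ≤
      ∫ ξ, ‖c₁ • gaussCharFun m₁ S₁ ξ - c₂ • gaussCharFun m₂ S₂ ξ‖ := by
  have hint₁ := (integrable_gaussCharFun_mul_cexp_neg hS₁ m₁ y).fun_smul c₁
  have hint₂ := (integrable_gaussCharFun_mul_cexp_neg hS₂ m₂ y).fun_smul c₂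
  have inversion : ((2 * π) ^ K * (c₁ * gaussDensity m₁ S₁ y - c₂ * gaussDensity m₂ S₂ y) : ℝ) =
      ∫ ξ, (c₁ • gaussCharFun m₁ S₁ ξ - c₂ • gaussCharFun m₂ S₂ ξ) *
        Complex.exp (-(ξ ⬝ᵥ y : ℝ) * I) := by
    simp only [sub_mul, smul_mul_assoc]
    rw [integral_sub hint₁ hint₂, integral_smul, integral_smul,
      integral_gaussCharFun_mul_cexp_neg hS₁, integral_gaussCharFun_mul_cexp_neg hS₂,
      Complex.real_smul, Complex.real_smul]
    push_cast
    ring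
  calc (2 * π) ^ K * |c₁ * gaussDensity m₁ S₁ y - c₂ * gaussDensity m₂ S₂ y|
      = ‖((2 * π) ^ K * (c₁ * gaussDensity m₁ S₁ y - c₂ * gaussDensity m₂ S₂ y) : ℝ)‖ := by
        rw [norm_mul, Real.norm_eq_abs, Real.norm_eq_abs,
          abs_of_nonneg (a := (2 * π) ^ K) (by positivity)]
    _ = ‖∫ ξ, (c₁ • gaussCharFun m₁ S₁ ξ - c₂ • gaussCharFun m₂ S₂ ξ) *
          Complex.exp (-(ξ ⬝ᵥ y : ℝ) * I)‖ := by rw [← inversion, Complex.norm_real]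
    _ ≤ ∫ ξ, ‖(c₁ • gaussCharFun m₁ S₁ ξ - c₂ • gaussCharFun m₂ S₂ ξ) *
          Complex.exp (-(ξ ⬝ᵥ y : ℝ) * I)‖ := norm_integral_le_integral_norm _
    _ = ∫ ξ, ‖c₁ • gaussCharFun m₁ S₁ ξ - c₂ • gaussCharFun m₂ S₂ ξ‖ := by
        simp only [norm_mul, ← Complex.ofReal_neg, Complex.norm_exp_ofReal_mul_I, mul_one]

end FourierTransform

theorem linf_l1_gaussian_differences_general {r : ℝ} (hr : 0 < r) (c₁ c₂ : ℝ) (m₁ m₂ : Vec K)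
    {S₁ S₂ : Matrix (Fin K) (Fin K) ℝ} (hS₁ : loe (r • 1) S₁) (hS₂ : loe (r • 1) S₂) (y : Vec K) :
    |c₁ * gaussDensity m₁ S₁ y - c₂ * gaussDensity m₂ S₂ y| ≤
      9 * √(2 / (3 * π * r)) ^ K *
        ∫ z, |c₁ * gaussDensity m₁ S₁ z - c₂ * gaussDensity m₂ S₂ z| := by
  set δ := ∫ z, |c₁ * gaussDensity m₁ S₁ z - c₂ * gaussDensity m₂ S₂ z|
  have decay := gaussCharFun.norm_smul_sub_smul_le_exp hr.le hS₁ hS₂ <|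
    norm_gaussCharFun_sub_le_integral (hS₁.posDef hr) (hS₂.posDef hr) c₁ c₂ m₁ m₂
  have sqrt_eq : √(π / (3 * r / 8)) = 2 * π * √(2 / (3 * π * r)) := by
    rw [← Real.sqrt_sq (by positivity : 0 ≤ 2 * π), ← Real.sqrt_mul (by positivity)]
    congr 1
    field_simp
    norm_num
  refine le_of_mul_le_mul_left ?_ (by positivity : 0 < (2 * π) ^ K)
  calc (2 * π) ^ K * |c₁ * gaussDensity m₁ S₁ y - c₂ * gaussDensity m₂ S₂ y|
      ≤ ∫ ξ, ‖c₁ • gaussCharFun m₁ S₁ ξ - c₂ • gaussCharFun m₂ S₂ ξ‖ :=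
        abs_gaussDensity_sub_le_integral (hS₁.posDef hr) (hS₂.posDef hr) c₁ c₂ m₁ m₂ y
    _ ≤ ∫ ξ : Vec K, 9 * δ * Real.exp (-(3 * r / 8) * (ξ ⬝ᵥ ξ)) :=
        integral_mono_of_nonneg (.of_forall fun _ => norm_nonneg _)
          ((integrable_exp_neg_mul_dotProduct_self (by positivity)).const_mul _)
          (.of_forall decay)
    _ = 9 * δ * (2 * π * √(2 / (3 * π * r))) ^ K := by
        rw [integral_const_mul, integral_exp_neg_mul_dotProduct_self, sqrt_eq, Fintype.card_fin]
    _ = (2 * π) ^ K * (9 * √(2 / (3 * π * r)) ^ K * δ) := by ring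

/-- **Uniform L∞–L¹ inequality for differences of scaled Gaussian densities** (Lemma B.2). -/
theorem linf_l1_gaussian_differences
    (K : ℕ) (α : ℝ) (hα : 1 ≤ α) :
    ∃ L : ℝ, 0 < L ∧
      ∀ (c₁ c₂ : ℝ) (m₁ m₂ : Vec K) (S₁ S₂ : Matrix (Fin K) (Fin K) ℝ),
        S₁.IsSymm → S₂.IsSymm →
        loe (α⁻¹ • 1) S₁ → loe S₁ (α • 1) →
        loe (α⁻¹ • 1) S₂ → loe S₂ (α • 1) →
        ∀ y : Vec K,
          |c₁ * gaussDensity m₁ S₁ y - c₂ * gaussDensity m₂ S₂ y| ≤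
            L * ∫ z, |c₁ * gaussDensity m₁ S₁ z - c₂ * gaussDensity m₂ S₂ z| := by
  have hα₀ : 0 < α⁻¹ := by positivity
  exact ⟨9 * √(2 / (3 * π * α⁻¹)) ^ K, by positivity, fun c₁ c₂ m₁ m₂ _ _ _ _ hS₁ _ hS₂ _ =>
    linf_l1_gaussian_differences_general hα₀ c₁ c₂ m₁ m₂ hS₁ hS₂⟩

end EnKF
end
end

section
/- For every real u ≥ 0 (with the convention 0·log 0 = 0), it holds that u log u ≥ (u − 1) + (u − 1)²/(2 max{1, u}). -/
open MeasureTheory Matrix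
open scoped BigOperators ENNReal

noncomputable section

namespace EnKF

variable {d K : ℕ}

/-!
On `[0, M]` the second derivative `1 / x` of `x * log x` is at least `1 / M`, so `x * log x` is
`1 / M`-strongly convex there. Hence at `u` it exceeds its tangent line at `a` by at least
`(u - a) ^ 2 / (2 * M)`, and `max a u` is the smallest `M` for which `[0, M]` contains both points.
-/

open Set Filter Topology

section UniformConvexity

variable {E : Type*} [NormedAddCommGroup E] [NormedSpace ℝ E] {s : Set E} {φ : ℝ → ℝ} {f : E → ℝ}
  {x y : E}

theorem slope_segment_le_of_uniformConvexOn (hf : UniformConvexOn s φ f) (hx : x ∈ s) (hy : y ∈ s)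
    {t : ℝ} (ht : t ∈ Ioc 0 1) :
    slope (fun t : ℝ ↦ f (x + t • (y - x))) 0 t ≤ f y - f x - (1 - t) * φ ‖y - x‖ := by
  have hconv := hf.2 hy hx ht.1.le (sub_nonneg.2 ht.2) (add_sub_cancel t 1)
  have hpoint : t • y + (1 - t) • x = x + t • (y - x) := by module
  rw [hpoint, smul_eq_mul, smul_eq_mul] at hconv
  rw [slope_def_field, sub_zero, zero_smul, add_zero, div_le_iff₀ ht.1]
  linarith

theorem add_lineDeriv_add_le_of_uniformConvexOn (hf : UniformConvexOn s φ f) (hx : x ∈ s)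
    (hy : y ∈ s) {f' : ℝ} (hf' : HasLineDerivWithinAt ℝ f f' s x (y - x)) :
    f x + f' + φ ‖y - x‖ ≤ f y := by
  have hsegment : Ioc (0 : ℝ) 1 ⊆ (fun t : ℝ ↦ x + t • (y - x)) ⁻¹' s := fun t ht ↦
    hf.1.add_smul_sub_mem hx hy ⟨ht.1.le, ht.2⟩
  have hslope : Tendsto (slope (fun t : ℝ ↦ f (x + t • (y - x))) 0) (𝓝[Ioc 0 1] 0) (𝓝 f') :=
    (hasDerivWithinAt_iff_tendsto_slope' left_notMem_Ioc).1 (HasDerivWithinAt.mono hf' hsegment)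
  have hbound : Tendsto (fun t : ℝ ↦ f y - f x - (1 - t) * φ ‖y - x‖) (𝓝[Ioc 0 1] 0)
      (𝓝 (f y - f x - (1 - 0) * φ ‖y - x‖)) :=
    (Continuous.tendsto (by fun_prop) 0).mono_left nhdsWithin_le_nhds
  have : (𝓝[Ioc (0 : ℝ) 1] 0).NeBot := left_nhdsWithin_Ioc_neBot one_pos
  have hle : f' ≤ f y - f x - (1 - 0) * φ ‖y - x‖ :=
    le_of_tendsto_of_tendsto hslope hbound <|
      eventually_mem_nhdsWithin.mono fun _ ↦ slope_segment_le_of_uniformConvexOn hf hx hy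
  linarith

end UniformConvexity

theorem strongConvexOn_of_hasDerivWithinAt2_ge {D : Set ℝ} (hD : Convex ℝ D) {f f' f'' : ℝ → ℝ}
    {m : ℝ} (hf : ContinuousOn f D)
    (hf' : ∀ x ∈ interior D, HasDerivWithinAt f (f' x) (interior D) x)
    (hf'' : ∀ x ∈ interior D, HasDerivWithinAt f' (f'' x) (interior D) x)
    (hm : ∀ x ∈ interior D, m ≤ f'' x) :
    StrongConvexOn D m f := by
  simp only [strongConvexOn_iff_convex, Real.norm_eq_abs, sq_abs]
  refine convexOn_of_hasDerivWithinAt2_nonneg (f' := fun x ↦ f' x - m * x)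
    (f'' := fun x ↦ f'' x - m) hD (by fun_prop) (fun x hx ↦ ?_) (fun x hx ↦ ?_)
    fun x hx ↦ sub_nonneg.2 (hm x hx)
  · have hsquare : HasDerivAt (fun x : ℝ ↦ m / 2 * x ^ 2) (m * x) x :=
      ((hasDerivAt_pow 2 x).const_mul (m / 2)).congr_deriv (by push_cast; ring)
    exact (hf' x hx).fun_sub hsquare.hasDerivWithinAt
  · exact (hf'' x hx).fun_sub (hasDerivAt_const_mul m).hasDerivWithinAt

theorem strongConvexOn_mul_log (M : ℝ) :
    StrongConvexOn (Icc 0 M) M⁻¹ fun x ↦ x * Real.log x := by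
  refine strongConvexOn_of_hasDerivWithinAt2_ge (f' := fun x ↦ Real.log x + 1)
    (f'' := fun x ↦ x⁻¹) (convex_Icc 0 M) Real.continuous_mul_log.continuousOn ?_ ?_ ?_ <;>
    rw [interior_Icc] <;> intro x hx
  · exact (Real.hasDerivAt_mul_log hx.1.ne').hasDerivWithinAt
  · exact ((Real.hasDerivAt_log hx.1.ne').add_const 1).hasDerivWithinAt
  · exact inv_anti₀ hx.1 hx.2.le

theorem mul_log_ge_taylor_general {a u : ℝ} (ha : 0 < a) (hu : 0 ≤ u) :
    a * Real.log a + (Real.log a + 1) * (u - a) + (u - a) ^ 2 / (2 * max a u) ≤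
      u * Real.log u := by
  have hderiv : HasLineDerivWithinAt ℝ (fun x ↦ x * Real.log x) ((Real.log a + 1) * (u - a))
      (Icc 0 (max a u)) a (u - a) := by
    simpa [mul_comm] using
      (Real.hasDerivAt_mul_log ha.ne').hasFDerivAt.hasFDerivWithinAt.hasLineDerivWithinAt (u - a)
  have htaylor := add_lineDeriv_add_le_of_uniformConvexOn (strongConvexOn_mul_log (max a u))
    ⟨ha.le, le_max_left a u⟩ ⟨hu, le_max_right a u⟩ hderiv
  have hquadratic : (max a u)⁻¹ / 2 * ‖u - a‖ ^ 2 = (u - a) ^ 2 / (2 * max a u) := by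
    rw [Real.norm_eq_abs, sq_abs]
    ring
  rwa [hquadratic] at htaylor

/-- **Taylor lower bound for `u log u`** (used in the weighted Pinsker inequality):
for all `u ≥ 0`, `u log u ≥ (u − 1) + (u − 1)² / (2 max{1, u})`
(with the convention `0 · log 0 = 0`, which holds definitionally since `Real.log 0 = 0`). -/
theorem mul_log_ge_taylor (u : ℝ) (hu : 0 ≤ u) :
    (u - 1) + (u - 1) ^ 2 / (2 * max 1 u) ≤ u * Real.log u := by
  simpa using mul_log_ge_taylor_general one_pos hu

end EnKF
end
end
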